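/- (Proximity theorem) Let f : ℤⁿ → ℝ ∪ {+∞} be a DDM-convex function, α a positive integer, and x^α ∈ dom f. If f(x^α) ≤ f(x^α + αd) for all d ∈ {−1, 0, +1}ⁿ, then there exists a global minimizer x* of f (i.e., f(x*) ≤ f(z) for all z ∈ ℤⁿ) with ‖x^α − x*‖_∞ ≤ n(α − 1). -/

import Mathlib

open Finset

/-- Directed midpoint `μ(x,y)`: round `(xᵢ+yᵢ)/2` towards `xᵢ`, componentwise:
`μ(x,y)ᵢ = ⌈(xᵢ+yᵢ)/2⌉` if `xᵢ ≥ yᵢ`, and `μ(x,y)ᵢ = ⌊(xᵢ+yᵢ)/2⌋` if `xᵢ < yᵢ`. -/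
def dmu {n : ℕ} (x y : Fin n → ℤ) : Fin n → ℤ := fun i =>
  if y i ≤ x i then ⌈((x i + y i : ℤ) : ℚ) / 2⌉ else ⌊((x i + y i : ℤ) : ℚ) / 2⌋

/-- The ℓ∞-norm of an integer vector, as a natural number. -/
def normInf {n : ℕ} (z : Fin n → ℤ) : ℕ := Finset.univ.sup fun i => (z i).natAbs

/-- A function `f : ℤⁿ → ℝ ∪ {+∞}` is DDM-convex if
`f(x) + f(y) ≥ f(μ(x,y)) + f(μ(y,x))` for all `x, y ∈ ℤⁿ`. -/
def DDMConvexFn {n : ℕ} (f : (Fin n → ℤ) → EReal) : Prop :=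
  ∀ x y : Fin n → ℤ, f (dmu x y) + f (dmu y x) ≤ f x + f y

/-- Elements of `L` in odd (0-indexed) position. -/
def evPart (L : Finset ℕ) : Finset ℕ := L.filter fun k => Nat.count (· ∈ L) k % 2 = 1

theorem count_evPart (L : Finset ℕ) (t : ℕ) :
    Nat.count (· ∈ evPart L) t = Nat.count (· ∈ L) t / 2 := by
  induction t with
  | zero => simp
  | succ t ih =>
    rw [Nat.count_succ, Nat.count_succ, ih]
    by_cases h1 : t ∈ L
    · by_cases h2 : Nat.count (· ∈ L) t % 2 = 1
      · have : t ∈ evPart L := by simp [evPart, h1, h2]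
        simp only [this, h1, if_true]; omega
      · have : t ∉ evPart L := by simp [evPart, h1]; omega
        simp only [this, h1, if_true, if_false]; omega
    · have : t ∉ evPart L := by simp [evPart, h1]
      simp only [this, h1, if_false]; omega

theorem evPart_subset (L : Finset ℕ) : evPart L ⊆ L := Finset.filter_subset _ _

theorem count_union (A B : Finset ℕ) (h : Disjoint A B) (t : ℕ) :
    Nat.count (· ∈ A ∪ B) t = Nat.count (· ∈ A) t + Nat.count (· ∈ B) t := by
  induction t with
  | zero => simp
  | succ t ih =>
    rw [Nat.count_succ, Nat.count_succ, Nat.count_succ, ih]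
    have : t ∈ A → t ∉ B := fun h1 => Finset.disjoint_left.1 h h1
    by_cases h1 : t ∈ A <;> by_cases h2 : t ∈ B <;> simp_all <;> omega

theorem count_sdiff (A K : Finset ℕ) (h : A ⊆ K) (t : ℕ) :
    Nat.count (· ∈ K) t = Nat.count (· ∈ A) t + Nat.count (· ∈ K \ A) t := by
  rw [← count_union _ _ Finset.disjoint_sdiff, Finset.union_sdiff_of_subset h]

theorem count_large (L : Finset ℕ) (t : ℕ) (h : ∀ k ∈ L, k < t) :
    Nat.count (· ∈ L) t = L.card := by
  rw [Nat.count_eq_card_filter_range]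
  congr 1
  ext k; simp; exact h k

theorem card_evPart (L : Finset ℕ) : (evPart L).card = L.card / 2 := by
  have hb : ∀ k ∈ L, k < L.sup id + 1 := fun k hk =>
    Nat.lt_succ_of_le (Finset.le_sup (f := id) hk)
  rw [← count_large L _ hb, ← count_evPart, count_large]
  exact fun k hk => hb k (evPart_subset L hk)

theorem fin_interval (h : Finset ℕ → EReal) (hb : ∀ S, h S ≠ ⊥)
    (hs : ∀ J K, J ⊆ K →
      h (J ∪ evPart (K \ J)) + h (J ∪ ((K \ J) \ evPart (K \ J))) ≤ h J + h K) :
    ∀ m, ∀ J K, J ⊆ K → (K \ J).card = m → h J ≠ ⊤ → h K ≠ ⊤ →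
      ∀ S, J ⊆ S → S ⊆ K → h S ≠ ⊤ := by
  intro m
  induction m using Nat.strong_induction_on with
  | _ m ih =>
  intro J K hJK hm hJ hK S hJS hSK
  have hcard : ∀ A B : Finset ℕ, A ⊆ B → (B \ A).card + A.card = B.card :=
    fun A B hAB => Finset.card_sdiff_add_card_eq_card hAB
  by_cases hm2 : m ≤ 1
  · have c1 := hcard J K hJK
    have c2 := Finset.card_le_card hJS
    have c3 := Finset.card_le_card hSK
    by_cases e : S.card = J.card
    · rw [← Finset.eq_of_subset_of_card_le hJS (by omega)]; exact hJ
    · rw [Finset.eq_of_subset_of_card_le hSK (by omega)]; exact hK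
  set E := evPart (K \ J) with hE
  have hEs : E ⊆ K \ J := evPart_subset _
  have hEc : E.card = m / 2 := by rw [hE, card_evPart, hm]
  set O := (K \ J) \ E with hO
  have hOc : O.card = m - m / 2 := by
    have := hcard E (K \ J) hEs
    rw [← hO] at this; omega
  have hsum := hs J K hJK
  have hfin : h J + h K ≠ ⊤ := by
    exact (EReal.add_lt_top hJ hK).ne
  have hfin2 : h (J ∪ E) + h (J ∪ O) ≠ ⊤ := fun e => hfin (top_le_iff.1 (e ▸ hsum))
  have h1 : h (J ∪ E) ≠ ⊤ := fun e => hfin2 (by rw [e]; exact EReal.top_add_of_ne_bot (hb _))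
  have h2 : h (J ∪ O) ≠ ⊤ := fun e => hfin2 (by rw [e]; exact EReal.add_top_of_ne_bot (hb _))
  have hEK : J ∪ E ⊆ K := Finset.union_subset hJK (hEs.trans Finset.sdiff_subset)
  have hdE : (J ∪ E) \ J = E := by
    ext k; have := @hEs k; simp at this ⊢; tauto
  have hdO : K \ (J ∪ E) = O := by
    ext k; have := @hEs k; simp [hO] at this ⊢; tauto
  have f1 : h (S ∩ (J ∪ E)) ≠ ⊤ :=
    ih (m / 2) (by omega) J (J ∪ E) Finset.subset_union_left (by rw [hdE, hEc]) hJ h1 _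
      (Finset.subset_inter hJS Finset.subset_union_left) Finset.inter_subset_right
  have f2 : h (S ∪ (J ∪ E)) ≠ ⊤ :=
    ih (m - m / 2) (by omega) (J ∪ E) K hEK (by rw [hdO, hOc]) h1 hK _
      Finset.subset_union_right (Finset.union_subset hSK hEK)
  by_cases hSO : S = J ∪ O
  · rw [hSO]; exact h2
  refine ih _ ?_ (S ∩ (J ∪ E)) (S ∪ (J ∪ E))
    (Finset.inter_subset_left.trans Finset.subset_union_left) rfl f1 f2 S
    Finset.inter_subset_left Finset.subset_union_left
  rw [← hm]
  apply Finset.card_lt_card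
  refine ⟨?_, fun hle => hSO ?_⟩
  · intro k hk
    have a := @hJS k
    have b := @hSK k
    have c := @hEK k
    simp at hk a b c ⊢
    tauto
  · ext k
    have a := @hJS k
    have b := @hSK k
    have c := @hEs k
    have d := @hle k
    simp [hO] at a b c d ⊢
    tauto

theorem super_real (φ : Finset ℕ → ℝ)
    (h : ∀ J a b, a ≠ b → φ (insert a J) + φ (insert b J) ≤ φ J + φ (insert a (insert b J)))
    (A B : Finset ℕ) (hAB : Disjoint A B) : φ A + φ B ≤ φ ∅ + φ (A ∪ B) := by
  have step1 : ∀ a, ∀ B : Finset ℕ, a ∉ B → ∀ J,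
      φ (insert a J) + φ (B ∪ J) ≤ φ J + φ (insert a (B ∪ J)) := by
    intro a B
    induction B using Finset.induction_on with
    | empty => intro _ J; simp [add_comm]
    | insert b B hb ih =>
      intro ha J
      simp only [Finset.mem_insert, not_or] at ha
      have h1 := ih ha.2 J
      have h2 := h (B ∪ J) a b ha.1
      rw [Finset.insert_union]
      linarith
  induction A using Finset.induction_on with
  | empty => simp
  | insert a A ha ih =>
    rw [Finset.disjoint_insert_left] at hAB
    have h1 := ih hAB.2
    have h2 := step1 a B hAB.1 A
    rw [Finset.insert_union, Finset.union_comm A B]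
    rw [Finset.union_comm A B] at h1
    linarith

theorem super_ereal (h : Finset ℕ → EReal) (hb : ∀ S, h S ≠ ⊥)
    (hs : ∀ J K, J ⊆ K →
      h (J ∪ evPart (K \ J)) + h (J ∪ ((K \ J) \ evPart (K \ J))) ≤ h J + h K)
    (K A : Finset ℕ) (hA : A ⊆ K) (h0 : h ∅ ≠ ⊤) (hK : h K ≠ ⊤) :
    h A + h (K \ A) ≤ h ∅ + h K := by
  have fin : ∀ S, S ⊆ K → h S ≠ ⊤ := fun S hS =>
    fin_interval h hb hs _ ∅ K (by simp) rfl h0 hK S (by simp) hS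
  set φ : Finset ℕ → ℝ := fun S => (h (S ∩ K)).toReal with hφ
  have hco : ∀ S, S ⊆ K → h S = (φ S : EReal) := by
    intro S hS
    rw [hφ]; dsimp only
    rw [Finset.inter_eq_left.2 hS, EReal.coe_toReal (fin S hS) (hb S)]
  have loc : ∀ J a b, a ≠ b →
      φ (insert a J) + φ (insert b J) ≤ φ J + φ (insert a (insert b J)) := by
    intro J a b hab
    by_cases haK : a ∈ K
    swap
    · have e : ∀ T : Finset ℕ, φ (insert a T) = φ T := by
        intro T; simp only [hφ]; rw [Finset.insert_inter_of_notMem haK]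
      rw [e, e]
    by_cases hbK : b ∈ K
    swap
    · have e : ∀ T : Finset ℕ, φ (insert b T) = φ T := by
        intro T; simp only [hφ]; rw [Finset.insert_inter_of_notMem hbK]
      rw [Finset.insert_comm, e, e, add_comm]
    by_cases haJ : a ∈ J
    · rw [Finset.insert_eq_of_mem haJ, Finset.insert_eq_of_mem (Finset.mem_insert_of_mem haJ)]
    by_cases hbJ : b ∈ J
    · rw [Finset.insert_eq_of_mem hbJ, add_comm]
    have red : ∀ T, φ T = φ (T ∩ K) := by intro T; simp [hφ]
    rw [red (insert a J), red (insert b J), red J, red (insert a (insert b J)),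
      Finset.insert_inter_of_mem haK, Finset.insert_inter_of_mem haK,
      Finset.insert_inter_of_mem hbK]
    set T := J ∩ K with hT
    have hTK : T ⊆ K := Finset.inter_subset_right
    have haT : a ∉ T := fun hh => haJ (Finset.mem_inter.1 hh).1
    have hbT : b ∉ T := fun hh => hbJ (Finset.mem_inter.1 hh).1
    have hs1 := hs T (insert a (insert b T)) (by intro k hk; simp [hk])
    have hd : insert a (insert b T) \ T = {a, b} := by
      ext k; simp only [Finset.mem_sdiff, Finset.mem_insert, Finset.mem_singleton]
      constructor
      · tauto
      · rintro (rfl | rfl) <;> tauto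
    rw [hd] at hs1
    have hc : (evPart {a, b}).card = 1 := by
      rw [card_evPart, Finset.card_pair hab]
    obtain ⟨c, hc⟩ := Finset.card_eq_one.1 hc
    have hcm : c ∈ ({a, b} : Finset ℕ) := evPart_subset _ (by rw [hc]; simp)
    rw [hc] at hs1
    have ka : insert a T ⊆ K := Finset.insert_subset haK hTK
    have kb : insert b T ⊆ K := Finset.insert_subset hbK hTK
    have kab : insert a (insert b T) ⊆ K := Finset.insert_subset haK kb
    have goal' : h (insert a T) + h (insert b T) ≤ h T + h (insert a (insert b T)) := by
      simp only [Finset.mem_insert, Finset.mem_singleton] at hcm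
      have ea : T ∪ {a} = insert a T := by rw [Finset.union_comm]; rfl
      have eb : T ∪ {b} = insert b T := by rw [Finset.union_comm]; rfl
      rcases hcm with rfl | rfl
      · have e : ({c, b} : Finset ℕ) \ {c} = {b} := by
          ext k; simp; constructor
          · tauto
          · rintro rfl; exact ⟨Or.inr rfl, fun hh => hab hh.symm⟩
        rw [e, ea, eb] at hs1; exact hs1
      · have e : ({a, c} : Finset ℕ) \ {c} = {a} := by
          ext k; simp; constructor
          · tauto
          · rintro rfl; exact ⟨Or.inl rfl, hab⟩
        rw [e, ea, eb, add_comm] at hs1; exact hs1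
    rw [hco _ ka, hco _ kb, hco _ hTK, hco _ kab] at goal'
    exact_mod_cast goal'
  have := super_real φ loc A (K \ A) Finset.disjoint_sdiff
  rw [Finset.union_sdiff_of_subset hA] at this
  rw [hco A hA, hco _ Finset.sdiff_subset, hco ∅ (by simp), hco K subset_rfl]
  exact_mod_cast this

/-- The point `x + ∑_{k ∈ S} e_k` in the layer decomposition of `z`. -/
def layerPt {n : ℕ} (x z : Fin n → ℤ) (S : Finset ℕ) : Fin n → ℤ := fun i =>
  x i + (z i).sign * (Nat.count (· ∈ S) (z i).natAbs : ℤ)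

theorem dmu_coord {n : ℕ} (x y : Fin n → ℤ) (i : Fin n) :
    dmu x y i = if y i ≤ x i then (x i + y i + 1) / 2 else (x i + y i) / 2 := by
  unfold dmu
  split_ifs
  · rw [Int.ceil_eq_iff]
    have h1 : ((x i + y i : ℤ) : ℚ) ≤ 2 * (((x i + y i + 1) / 2 : ℤ) : ℚ) := by
      exact_mod_cast (by omega : (x i + y i : ℤ) ≤ 2 * ((x i + y i + 1) / 2))
    have h2 : 2 * (((x i + y i + 1) / 2 : ℤ) : ℚ) ≤ ((x i + y i : ℤ) : ℚ) + 1 := by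
      exact_mod_cast (by omega : 2 * ((x i + y i + 1) / 2) ≤ (x i + y i : ℤ) + 1)
    constructor <;> linarith
  · rw [Int.floor_eq_iff]
    have h1 : 2 * (((x i + y i) / 2 : ℤ) : ℚ) ≤ ((x i + y i : ℤ) : ℚ) := by
      exact_mod_cast (by omega : 2 * ((x i + y i) / 2) ≤ (x i + y i : ℤ))
    have h2 : ((x i + y i : ℤ) : ℚ) ≤ 2 * (((x i + y i) / 2 : ℤ) : ℚ) + 1 := by
      exact_mod_cast (by omega : (x i + y i : ℤ) ≤ 2 * ((x i + y i) / 2) + 1)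
    constructor <;> linarith

theorem layer_split {n : ℕ} (x z : Fin n → ℤ) (J K : Finset ℕ) (hJK : J ⊆ K) :
    dmu (layerPt x z J) (layerPt x z K) = layerPt x z (J ∪ evPart (K \ J)) ∧
    dmu (layerPt x z K) (layerPt x z J) =
      layerPt x z (J ∪ ((K \ J) \ evPart (K \ J))) := by
  have dis : Disjoint J (K \ J) := Finset.disjoint_sdiff
  have key : ∀ i, _ := fun i => count_sdiff J K hJK (z i).natAbs
  have key1 : ∀ i, _ := fun i => count_evPart (K \ J) (z i).natAbs
  have key2 : ∀ i, _ := fun i => count_sdiff (evPart (K \ J)) (K \ J) (evPart_subset _) (z i).natAbs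
  have key3 : ∀ i, _ := fun i => count_union J (evPart (K \ J))
    (Finset.disjoint_of_subset_right (evPart_subset _) dis) (z i).natAbs
  have key4 : ∀ i, _ := fun i => count_union J ((K \ J) \ evPart (K \ J))
    (Finset.disjoint_of_subset_right Finset.sdiff_subset dis) (z i).natAbs
  constructor <;> funext i <;> rw [dmu_coord] <;> unfold layerPt <;>
    specialize key i <;> specialize key1 i <;> specialize key2 i <;>
    specialize key3 i <;> specialize key4 i
  · rw [key3, key1, key]
    generalize Nat.count (· ∈ J) (z i).natAbs = a
    generalize Nat.count (· ∈ K \ J) (z i).natAbs = b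
    rcases lt_trichotomy (z i) 0 with hz | hz | hz
    · rw [Int.sign_eq_neg_one_of_neg hz]; push_cast; split_ifs <;> omega
    · rw [hz]; simp; omega
    · rw [Int.sign_eq_one_of_pos hz]; push_cast; split_ifs <;> omega
  · rw [key1] at key2
    rw [key4, key]
    revert key2
    generalize Nat.count (· ∈ J) (z i).natAbs = a
    generalize Nat.count (· ∈ K \ J) (z i).natAbs = b
    generalize Nat.count (· ∈ (K \ J) \ evPart (K \ J)) (z i).natAbs = c
    intro key2
    rcases lt_trichotomy (z i) 0 with hz | hz | hz
    · rw [Int.sign_eq_neg_one_of_neg hz]; push_cast; split_ifs <;> omega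
    · rw [hz]; simp; omega
    · rw [Int.sign_eq_one_of_pos hz]; push_cast; split_ifs <;> omega

theorem pigeon {n : ℕ} (z : Fin n → ℤ) (α : ℕ) (hα : 0 < α)
    (hz : n * (α - 1) < normInf z) :
    ∃ J ⊆ Finset.range (normInf z), J.card = α ∧
      (∀ i, (∀ k ∈ J, k < (z i).natAbs) ∨ (∀ k ∈ J, (z i).natAbs ≤ k)) ∧
      ∃ i, ∀ k ∈ J, k < (z i).natAbs := by
  have hex : ∃ i, (z i).natAbs = normInf z := by
    have hne : (Finset.univ : Finset (Fin n)).Nonempty := by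
      rw [Finset.nonempty_iff_ne_empty]
      intro he
      unfold normInf at hz; rw [he] at hz; simp at hz
    obtain ⟨i, _, hi⟩ := Finset.exists_mem_eq_sup Finset.univ hne fun i => (z i).natAbs
    exact ⟨i, hi.symm⟩
  obtain ⟨i0, hi0⟩ := hex
  set c : ℕ → Finset (Fin n) := fun k => Finset.univ.filter fun i => k < (z i).natAbs with hc
  have hmaps : ∀ k ∈ Finset.range (normInf z), (c k).card ∈ Finset.Icc 1 n := by
    intro k hk
    rw [Finset.mem_Icc]
    constructor
    · apply Finset.card_pos.2
      exact ⟨i0, by simp [hc, hi0] at hk ⊢; exact hk⟩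
    · simpa using Finset.card_le_univ (c k)
  obtain ⟨v, _, hv⟩ := Finset.exists_lt_card_fiber_of_mul_lt_card_of_maps_to
    (n := α - 1) hmaps (by simpa using hz)
  obtain ⟨J, hJs, hJc⟩ := Finset.exists_subset_card_eq (n := α) (Nat.le_of_pred_lt hv)
  have hJm : ∀ k ∈ J, k < normInf z ∧ (c k).card = v := fun k hk => by
    simpa using hJs hk
  refine ⟨J, fun k hk => Finset.mem_range.2 (hJm k hk).1, hJc, ?_, i0, fun k hk => ?_⟩
  · intro i
    by_contra hcon
    push Not at hcon
    obtain ⟨⟨k, hk, hk1⟩, ⟨l, hl, hl1⟩⟩ := hcon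
    have hlt : l < k := by omega
    have hsub : c k ⊆ c l := by
      intro j hj; simp [hc] at hj ⊢; omega
    have heq := Finset.eq_of_subset_of_card_le hsub (by rw [(hJm k hk).2, (hJm l hl).2])
    have : i ∈ c l := by simp [hc, hl1]
    rw [← heq] at this
    simp [hc] at this; omega
  · rw [hi0]; exact (hJm k hk).1

theorem descent {n : ℕ} (f : (Fin n → ℤ) → EReal)
    (hbot : ∀ x, f x ≠ ⊥) (hf : DDMConvexFn f)
    (α : ℕ) (hα : 0 < α) (x : Fin n → ℤ) (hx : f x ≠ ⊤)
    (hloc : ∀ d : Fin n → ℤ, (∀ i, d i = -1 ∨ d i = 0 ∨ d i = 1) →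
      f x ≤ f (fun i => x i + (α : ℤ) * d i))
    (y : Fin n → ℤ) (hy : n * (α - 1) < normInf (y - x)) :
    ∃ y', f y' ≤ f y ∧ ∑ i, (y' i - x i).natAbs < ∑ i, (y i - x i).natAbs := by
  set z := y - x with hz
  obtain ⟨J, hJK, hJc, hJ, i0, hi0⟩ := pigeon z α hα hy
  set K := Finset.range (normInf z) with hK
  have hcJ : ∀ i, (∀ k ∈ J, k < (z i).natAbs) → Nat.count (· ∈ J) (z i).natAbs = α :=
    fun i h => by rw [count_large J _ h, hJc]
  have hcJ0 : ∀ i, (∀ k ∈ J, (z i).natAbs ≤ k) → Nat.count (· ∈ J) (z i).natAbs = 0 := by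
    intro i h
    rw [Nat.count_eq_card_filter_range, Finset.card_eq_zero, Finset.filter_eq_empty_iff]
    intro k hk hkJ
    have := h k hkJ
    simp at hk; omega
  have hcK : ∀ i, Nat.count (· ∈ K) (z i).natAbs = (z i).natAbs := by
    intro i
    rw [Nat.count_eq_card_filter_range, Finset.filter_true_of_mem, Finset.card_range]
    intro k hk
    have : (z i).natAbs ≤ normInf z :=
      Finset.le_sup (f := fun i => (z i).natAbs) (Finset.mem_univ i)
    simp [hK] at hk ⊢; omega
  have hcd : ∀ i, (z i).natAbs = Nat.count (· ∈ J) (z i).natAbs +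
      Nat.count (· ∈ K \ J) (z i).natAbs := fun i => by
    rw [← count_sdiff J K hJK, hcK]
  have p0 : layerPt x z ∅ = x := by funext i; simp [layerPt]
  have pK : layerPt x z K = y := by
    funext i; unfold layerPt; rw [hcK, Int.sign_mul_natAbs]; simp [hz]
  refine ⟨layerPt x z (K \ J), ?_, ?_⟩
  · by_cases hyt : f y = ⊤
    · rw [hyt]; exact le_top
    have main := super_ereal (fun S => f (layerPt x z S)) (fun _ => hbot _) (by
      intro A B hAB
      obtain ⟨e1, e2⟩ := layer_split x z A B hAB
      have := hf (layerPt x z A) (layerPt x z B)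
      rw [e1, e2] at this
      exact this) K J hJK (by simp only [p0]; exact hx) (by simp only [pK]; exact hyt)
    simp only [p0, pK] at main
    have hle : f x ≤ f (layerPt x z J) := by
      have := hloc (fun i => if ∀ k ∈ J, k < (z i).natAbs then (z i).sign else 0) (by
        intro i
        split_ifs
        · rcases Int.sign_trichotomy (z i) with h | h | h <;> simp [h]
        · simp)
      convert this using 2
      funext i
      unfold layerPt
      rcases hJ i with h | h
      · rw [if_pos h, hcJ i h, mul_comm]
      · rw [hcJ0 i h]
        split_ifs with h'
        · have := hcJ i h'; rw [hcJ0 i h] at this; omega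
        · simp
    have h3 : f x + f (layerPt x z (K \ J)) ≤ f x + f y := (add_le_add_left hle _).trans main
    lift f x to ℝ using ⟨hx, hbot x⟩ with a
    exact EReal.addLECancellable_coe a h3
  · have hab : ∀ i, (layerPt x z (K \ J) i - x i).natAbs ≤
        Nat.count (· ∈ K \ J) (z i).natAbs := by
      intro i
      unfold layerPt
      rcases Int.sign_trichotomy (z i) with h | h | h <;> rw [h] <;> omega
    have hyz : ∀ i, (y i - x i).natAbs = (z i).natAbs := fun i => by simp [hz]
    apply Finset.sum_lt_sum
    · intro i _
      rw [hyz]; have := hab i; have := hcd i; omega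
    · refine ⟨i0, Finset.mem_univ _, ?_⟩
      rw [hyz]; have := hab i0; have := hcd i0; have := hcJ i0 hi0; omega

/-- Proximity theorem: if `f` is DDM-convex, `α` a positive integer,
`xᵅ ∈ dom f` and `f(xᵅ) ≤ f(xᵅ + αd)` for all `d ∈ {-1,0,+1}ⁿ`, then there is a
global minimizer `x*` of `f` with `‖xᵅ - x*‖_∞ ≤ n(α-1)`. -/
theorem ddmConvex_proximity {n : ℕ} (f : (Fin n → ℤ) → EReal)
    (hbot : ∀ x, f x ≠ ⊥) (hf : DDMConvexFn f)
    (α : ℕ) (hα : 0 < α) (xα : Fin n → ℤ) (hxα : f xα ≠ ⊤)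
    (hloc : ∀ d : Fin n → ℤ, (∀ i, d i = -1 ∨ d i = 0 ∨ d i = 1) →
      f xα ≤ f (fun i => xα i + (α : ℤ) * d i)) :
    ∃ xstar : Fin n → ℤ, (∀ z : Fin n → ℤ, f xstar ≤ f z) ∧
      normInf (xα - xstar) ≤ n * (α - 1) := by
  have hred : ∀ N : ℕ, ∀ y : Fin n → ℤ, ∑ i, (y i - xα i).natAbs = N →
      ∃ y', f y' ≤ f y ∧ normInf (y' - xα) ≤ n * (α - 1) := by
    intro N
    induction N using Nat.strong_induction_on with
    | _ N ih =>
    intro y hN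
    by_cases h : normInf (y - xα) ≤ n * (α - 1)
    · exact ⟨y, le_rfl, h⟩
    · obtain ⟨y', h1, h2⟩ := descent f hbot hf α hα xα hxα hloc y (not_le.1 h)
      obtain ⟨y'', h3, h4⟩ := ih _ (hN ▸ h2) y' rfl
      exact ⟨y'', h3.trans h1, h4⟩
  set R : ℕ := n * (α - 1) with hR
  have hbox : ∀ y : Fin n → ℤ, normInf (y - xα) ≤ R ↔
      y ∈ Finset.Icc (fun i => xα i - (R : ℤ)) (fun i => xα i + (R : ℤ)) := by
    intro y
    unfold normInf
    rw [Finset.sup_le_iff, Finset.mem_Icc, Pi.le_def, Pi.le_def]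
    simp only [Finset.mem_univ, true_implies, Pi.sub_apply]
    constructor
    · intro h
      exact ⟨fun i => by have := h i; omega, fun i => by have := h i; omega⟩
    · intro h i
      have := h.1 i; have := h.2 i; omega
  obtain ⟨s, hs, hmin⟩ := Finset.exists_min_image
    (Finset.Icc (fun i => xα i - (R : ℤ)) (fun i => xα i + (R : ℤ))) f
    ⟨xα, (hbox xα).1 (by simp [normInf])⟩
  refine ⟨s, fun y => ?_, ?_⟩
  · obtain ⟨y', h1, h2⟩ := hred _ y rfl
    exact (hmin y' ((hbox y').1 h2)).trans h1
  · have := (hbox s).2 hs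
    unfold normInf at this ⊢
    convert this using 3 with i
    simp only [Pi.sub_apply]; omega
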